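/- arXiv:2604.12557 — 3 statements merged into one kernel-verified Lean document; each statement's English description precedes it below -/
import Mathlib

section
/- The generating function for the number of partitions of n with exactly m missing integers satisfies: the sum over n ≥ 0 and m ≥ 0 of P(n,m) w^m q^n equals ((w-1)q; q)_∞ / (wq; q)_∞, where P(0,0) = 1. -/
/-!
A partition with largest part `k ≥ 1` is a vector of multiplicities of `1, …, k` whose last entry is
positive. A size `j < k` contributes `w` if it is missing and `q ^ (j c)` if it occurs `c ≥ 1` times,
so the partitions with largest part `k` contribute
`q ^ k / (1 - q ^ k) * ∏_{0 < j < k} (w + q ^ j / (1 - q ^ j))`.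
Since `w + q ^ j / (1 - q ^ j) = (w - (w - 1) q ^ j) / (1 - q ^ j)`, this is the `k`-th term
`((w-1)/w; q)_k / (q; q)_k * (w q) ^ k` of a `q`-binomial series (`prod_totals`), whose `0`-th term
`1` accounts for the empty partition, and the
`q`-binomial theorem (`qBinomial`) evaluates the sum over `k`.

The `q`-binomial theorem is proved from the functional equation
`(1 - w x) F(x) = (1 - (w - 1) x) F(q x)` of `F(x) = ∑ coeff w q n * x ^ n`, iterated from `x = q`,
together with `F(x) → F(0) = 1` along `x = q ^ (N + 1)`. All rearrangements are justified by absolute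
convergence: the norms of the terms are the terms of the same real series at `‖w‖`, `‖q‖`, which
converges by the ratio test because `‖w q‖ < 1` (`summable_coeff`, `hasSum_vectors`).
-/

/-- The number of missing integers of a partition: positive integers less than
the largest part which do not occur as a part. -/
def missingCount {n : ℕ} (π : n.Partition) : ℕ :=
  ((Finset.Ico 1 π.parts.sup).filter (fun j => j ∉ π.parts)).card

/-- `Pcount n m` is the number of partitions of `n` with exactly `m` missing integers. -/
def Pcount (n m : ℕ) : ℕ := Fintype.card {π : n.Partition // missingCount π = m}

open Filter Topology

namespace MissingIntegers

/-- The coefficient `((w-1)/w; q)_n w ^ n / (q; q)_n` of the `q`-binomial series, written without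
dividing by `w`. -/
noncomputable def coeff {𝕜 : Type*} [RCLike 𝕜] (w q : 𝕜) (n : ℕ) : 𝕜 :=
  ∏ j ∈ Finset.range n, (w - (w - 1) * q ^ j) / (1 - q ^ (j + 1))

/-! ### The `q`-binomial theorem -/

section Analytic

variable {𝕜 : Type*} [RCLike 𝕜]

lemma one_sub_pow_ne_zero {q : 𝕜} (hq : ‖q‖ < 1) (j : ℕ) : 1 - q ^ (j + 1) ≠ 0 := by
  intro h
  have h1 : ‖q ^ (j + 1)‖ = 1 := by rw [← sub_eq_zero.1 h]; simp
  rw [norm_pow] at h1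
  exact absurd h1 (pow_lt_one₀ (norm_nonneg _) hq (by omega)).ne

lemma coeff_succ {w q : 𝕜} (hq : ‖q‖ < 1) (n : ℕ) :
    coeff w q (n + 1) * (1 - q ^ (n + 1)) = coeff w q n * (w - (w - 1) * q ^ n) := by
  have := one_sub_pow_ne_zero hq n
  rw [coeff, coeff, Finset.prod_range_succ]
  field_simp

/-- Absolute convergence of the `q`-binomial series: the ratio of consecutive terms tends to
`w * x`. -/
lemma summable_coeff {w q x : 𝕜} (hq : ‖q‖ < 1) (hx : ‖w * x‖ < 1) :
    Summable fun n => coeff w q n * x ^ n := by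
  obtain ⟨r, hr, hr1⟩ := exists_between hx
  refine summable_of_ratio_norm_eventually_le (r := r) hr1 ?_
  have hq0 : Tendsto (fun n : ℕ => q ^ n) atTop (𝓝 0) := tendsto_pow_atTop_nhds_zero_of_norm_lt_one hq
  have hlim : Tendsto (fun n : ℕ => ‖(w - (w - 1) * q ^ n) / (1 - q ^ (n + 1)) * x‖) atTop
      (𝓝 ‖(w - (w - 1) * 0) / (1 - 0) * x‖) := by
    refine Tendsto.norm (Tendsto.mul_const _ (Tendsto.div ?_ ?_ (by simp)))
    · exact tendsto_const_nhds.sub (hq0.const_mul _)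
    · exact tendsto_const_nhds.sub (hq0.comp (tendsto_add_atTop_nat 1))
  have hlim' := hlim.eventually_lt_const (u := r) (by
    simpa only [mul_zero, sub_zero, div_one] using hr)
  filter_upwards [hlim'] with n hn
  have : coeff w q (n + 1) * x ^ (n + 1) =
      ((w - (w - 1) * q ^ n) / (1 - q ^ (n + 1)) * x) * (coeff w q n * x ^ n) := by
    rw [coeff, coeff, Finset.prod_range_succ]; ring
  rw [this, norm_mul]
  gcongr

/-- The functional equation `(1 - w x) F(x) = (1 - (w - 1) x) F(q x)` of the `q`-binomial
series. -/
lemma functional_eq {w q x : 𝕜} (hq : ‖q‖ < 1) (hx : ‖w * x‖ < 1) :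
    (1 - w * x) * ∑' n, coeff w q n * x ^ n =
      (1 - (w - 1) * x) * ∑' n, coeff w q n * (x * q) ^ n := by
  have hxq : ‖w * (x * q)‖ < 1 := by
    rw [← mul_assoc, norm_mul]
    exact mul_lt_one_of_nonneg_of_lt_one_left (norm_nonneg _) hx hq.le
  have s1 := summable_coeff hq hx
  have s2 := summable_coeff (w := w) hq hxq
  have e1 := s1.tsum_eq_zero_add
  have e2 := s2.tsum_eq_zero_add
  have s1' := (summable_nat_add_iff 1).2 s1
  have s2' := (summable_nat_add_iff 1).2 s2
  have key : ∑' n, (coeff w q (n + 1) * x ^ (n + 1) - coeff w q (n + 1) * (x * q) ^ (n + 1)) =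
      ∑' n, (w * x * (coeff w q n * x ^ n) - (w - 1) * x * (coeff w q n * (x * q) ^ n)) := by
    refine tsum_congr fun n => ?_
    have := coeff_succ (w := w) hq n
    rw [mul_pow, mul_pow]
    linear_combination x ^ (n + 1) * this
  rw [s1'.tsum_sub s2', (s1.mul_left _).tsum_sub (s2.mul_left _), tsum_mul_left,
    tsum_mul_left] at key
  simp only [pow_zero] at e1 e2
  linear_combination key + e1 - e2

/-- The `q`-binomial theorem at the argument `w q`. -/
lemma qBinomial {w q : 𝕜} (hq : ‖q‖ < 1) (hwq : ‖w * q‖ < 1) :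
    ∑' n, coeff w q n * q ^ n =
      (∏' j : ℕ, (1 - (w - 1) * q ^ (j + 1))) / ∏' j : ℕ, (1 - w * q ^ (j + 1)) := by
  have hsum (a : 𝕜) : Summable fun j : ℕ => ‖-(a * q ^ (j + 1))‖ := by
    simp only [norm_neg, norm_mul, norm_pow]
    exact ((summable_nat_add_iff 1).2 (summable_geometric_of_lt_one (norm_nonneg _) hq)).mul_left _
  have hlt (j : ℕ) : ‖w * q ^ (j + 1)‖ < 1 := by
    rw [pow_succ', ← mul_assoc, norm_mul, norm_pow]
    exact mul_lt_one_of_nonneg_of_lt_one_left (norm_nonneg _) hwq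
      (pow_le_one₀ (norm_nonneg _) hq.le)
  have hmul (a : 𝕜) : Multipliable fun j : ℕ => 1 - a * q ^ (j + 1) := by
    simpa only [← sub_eq_add_neg] using multipliable_one_add_of_summable (hsum a)
  have hne : ∏' j : ℕ, (1 - w * q ^ (j + 1)) ≠ 0 := by
    have := tprod_one_add_ne_zero_of_summable (f := fun j : ℕ => -(w * q ^ (j + 1))) ?_ (hsum w)
    · simpa only [← sub_eq_add_neg] using this
    · intro j h
      have h1 : w * q ^ (j + 1) = 1 := by linear_combination -h
      have := hlt j
      simp [h1] at this
  rw [eq_div_iff hne]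
  -- the functional equation, iterated `N` times from `x = q`
  have hiter (N : ℕ) : (∏ j ∈ Finset.range N, (1 - w * q ^ (j + 1))) * ∑' n, coeff w q n * q ^ n =
      (∏ j ∈ Finset.range N, (1 - (w - 1) * q ^ (j + 1))) *
        ∑' n, coeff w q n * (q ^ (N + 1)) ^ n := by
    induction N with
    | zero => simp
    | succ N ih =>
      rw [Finset.prod_range_succ, Finset.prod_range_succ, pow_succ q (N + 1), mul_right_comm, ih]
      linear_combination (∏ j ∈ Finset.range N, (1 - (w - 1) * q ^ (j + 1))) *
        functional_eq hq (hlt N)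
  have hF : Tendsto (fun N : ℕ => ∑' n, coeff w q n * (q ^ (N + 1)) ^ n) atTop (𝓝 1) := by
    have h1 : ∑' n : ℕ, (if n = 0 then (1 : 𝕜) else 0) = 1 := by simp
    rw [← h1]
    refine tendsto_tsum_of_dominated_convergence
      (bound := fun n => ‖coeff w q n * q ^ n‖) (summable_coeff hq hwq).norm ?_ ?_
    · intro n
      rcases n with _ | n
      · simp [coeff]
      · have : Tendsto (fun N : ℕ => coeff w q (n + 1) * (q ^ (N + 1)) ^ (n + 1)) atTop
            (𝓝 (coeff w q (n + 1) * 0 ^ (n + 1))) :=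
          (((tendsto_pow_atTop_nhds_zero_of_norm_lt_one hq).comp
            (tendsto_add_atTop_nat 1)).pow _).const_mul _
        simpa using this
    · refine Eventually.of_forall fun N n => ?_
      simp only [norm_mul, norm_pow]
      gcongr
      exact pow_le_of_le_one (norm_nonneg _) hq.le (by omega)
  have l1 := (hmul w).hasProd.tendsto_prod_nat.mul_const (∑' n, coeff w q n * q ^ n)
  have l2 := (hmul (w - 1)).hasProd.tendsto_prod_nat.mul hF
  simp only [hiter] at l1
  rw [mul_comm, tendsto_nhds_unique l1 l2, mul_one]

/-- Fubini for products over finitely many independent summation indices. -/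
lemma hasSum_pi (k : ℕ) (g : Fin k → ℕ → 𝕜) (G : Fin k → 𝕜)
    (hn : ∀ j, Summable fun c => ‖g j c‖) (hG : ∀ j, HasSum (g j) (G j)) :
    (Summable fun f : Fin k → ℕ => ‖∏ j, g j (f j)‖) ∧
      HasSum (fun f : Fin k → ℕ => ∏ j, g j (f j)) (∏ j, G j) := by
  induction k with
  | zero => exact ⟨Summable.of_finite, by simp [hasSum_unique]⟩
  | succ k ih =>
    obtain ⟨i1, i2⟩ := ih (fun j => g j.succ) (fun j => G j.succ) (fun j => hn _) (fun j => hG _)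
    have hs := (hn 0).mul_norm i1
    have hm := (hG 0).mul i2 hs.of_norm
    let e : ℕ × (Fin k → ℕ) ≃ (Fin (k + 1) → ℕ) := Fin.consEquiv (fun _ => ℕ)
    have he (p : ℕ × (Fin k → ℕ)) :
        ∏ j, g j (e p j) = g 0 p.1 * ∏ j : Fin k, g j.succ (p.2 j) := by
      rw [Fin.prod_univ_succ]; simp [e, Fin.consEquiv]
    constructor
    · rw [← e.summable_iff]
      refine hs.congr fun p => ?_
      simp only [Function.comp, he]
    · rw [← e.hasSum_iff, Fin.prod_univ_succ]
      rw [← funext he] at hm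
      exact hm

end Analytic

/-! ### Summation over multiplicity vectors -/

section Weights

variable {𝕜 : Type*} [RCLike 𝕜]

/-- The contribution to `w ^ (missing) * q ^ (size)` of a size `d` occurring `c` times as a part;
a size with `c = 0` is missing and contributes `w`. -/
def wt (w q : 𝕜) (d c : ℕ) : 𝕜 := if c = 0 then w else q ^ (d * c)

/-- The number of forced occurrences of the size `j + 1` in a partition with largest part `k`: the
largest part occurs at least once. -/
def extra (k j : ℕ) : ℕ := if j + 1 = k then 1 else 0

lemma hasSum_wt {w q : 𝕜} (hq : ‖q‖ < 1) (k j : ℕ) :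
    HasSum (fun c => wt w q (j + 1) (c + extra k j))
      (if j + 1 = k then q ^ (j + 1) / (1 - q ^ (j + 1))
        else w + q ^ (j + 1) / (1 - q ^ (j + 1))) := by
  have hQ : ‖q ^ (j + 1)‖ < 1 := by
    rw [norm_pow]; exact pow_lt_one₀ (norm_nonneg _) hq (by omega)
  have h1 : HasSum (fun c => wt w q (j + 1) (c + 1)) (q ^ (j + 1) / (1 - q ^ (j + 1))) := by
    have := (hasSum_geometric_of_norm_lt_one hQ).mul_left (q ^ (j + 1))
    rw [div_eq_mul_inv]
    have he (c : ℕ) : wt w q (j + 1) (c + 1) = q ^ (j + 1) * (q ^ (j + 1)) ^ c := by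
      rw [wt, if_neg (Nat.succ_ne_zero c)]
      ring
    simpa only [he] using this
  unfold extra
  split_ifs with h
  · exact h1
  · rw [add_comm w]
    have h2 := (hasSum_nat_add_iff (f := fun c => wt w q (j + 1) c) 1).1 h1
    simpa [wt] using h2

lemma norm_wt (w q : 𝕜) (d c : ℕ) : ‖wt w q d c‖ = wt ‖w‖ ‖q‖ d c := by
  unfold wt; split_ifs <;> simp

/-- The generating function of the partitions with largest part `k` is the `k`-th term of the
`q`-binomial series. -/
lemma prod_totals {w q : 𝕜} (hq : ‖q‖ < 1) (k : ℕ) :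
    (∏ j : Fin k, (if (j : ℕ) + 1 = k then q ^ ((j : ℕ) + 1) / (1 - q ^ ((j : ℕ) + 1))
        else w + q ^ ((j : ℕ) + 1) / (1 - q ^ ((j : ℕ) + 1)))) = coeff w q k * q ^ k := by
  rw [Fin.prod_univ_eq_prod_range (fun j => if j + 1 = k then q ^ (j + 1) / (1 - q ^ (j + 1))
        else w + q ^ (j + 1) / (1 - q ^ (j + 1)))]
  rcases k with _ | n
  · simp [coeff]
  · rw [coeff, Finset.prod_div_distrib,
      Finset.prod_range_succ' (fun j => w - (w - 1) * q ^ j),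
      Finset.prod_range_succ, Finset.prod_range_succ]
    have : ∀ j ∈ Finset.range n, (if j + 1 = n + 1 then q ^ (j + 1) / (1 - q ^ (j + 1))
        else w + q ^ (j + 1) / (1 - q ^ (j + 1))) =
        (w - (w - 1) * q ^ (j + 1)) / (1 - q ^ (j + 1)) := by
      intro j hj
      have hj' : ¬ (j + 1 = n + 1) := by have := Finset.mem_range.1 hj; omega
      have := one_sub_pow_ne_zero hq j
      rw [if_neg hj']
      field_simp
      ring
    rw [Finset.prod_congr rfl this, Finset.prod_div_distrib]
    have h2 : ∏ j ∈ Finset.range n, (1 - q ^ (j + 1)) ≠ 0 :=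
      Finset.prod_ne_zero_iff.2 fun j _ => one_sub_pow_ne_zero hq j
    have := one_sub_pow_ne_zero hq n
    simp only [if_true, pow_zero]
    field_simp
    ring

/-- The sum of the weights over all multiplicity vectors, grouped by the largest part. -/
lemma hasSum_vectors {w q : 𝕜} (hq : ‖q‖ < 1) (hwq : ‖w * q‖ < 1) :
    HasSum (fun p : Σ k, (Fin k → ℕ) => ∏ j : Fin p.1, wt w q (j + 1) (p.2 j + extra p.1 j))
      (∑' k, coeff w q k * q ^ k) := by
  have hQ : ‖‖q‖‖ < 1 := by simpa using hq
  have hWQ : ‖‖w‖ * ‖q‖‖ < 1 := by simpa using hwq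
  have hnorm (k j : ℕ) : Summable fun c => ‖wt w q (j + 1) (c + extra k j)‖ := by
    simp only [norm_wt]; exact (hasSum_wt hQ k j).summable
  have hfib (k : ℕ) := hasSum_pi k (fun j c => wt w q (j + 1) (c + extra k j)) _
    (fun j => hnorm k j) (fun j => hasSum_wt hq k j)
  have hfibR (k : ℕ) := hasSum_pi k (fun j c => wt ‖w‖ ‖q‖ (j + 1) (c + extra k j)) _
    (fun j => (hasSum_wt hQ k j).summable.norm) (fun j => hasSum_wt hQ k j)
  simp only [prod_totals hq] at hfib
  simp only [prod_totals hQ] at hfibR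
  refine HasSum.sigma_of_hasSum (summable_coeff hq hwq).hasSum (fun k => (hfib k).2) ?_
  refine Summable.of_norm ((summable_sigma_of_nonneg fun _ => norm_nonneg _).2
    ⟨fun k => (hfib k).1, (summable_coeff hQ hWQ).congr fun k => ?_⟩)
  rw [← (hfibR k).2.tsum_eq]
  exact tsum_congr fun f => by simp only [norm_prod, norm_wt]

end Weights

/-! ### Partitions as multiplicity vectors -/

section Bijection

/-- The multiset with `p.2 j` copies of each `j + 1`, and one more copy of the top value `p.1`. -/
def parts (p : Σ k, (Fin k → ℕ)) : Multiset ℕ :=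
  ∑ j : Fin p.1, Multiset.replicate (p.2 j + extra p.1 j) ((j : ℕ) + 1)

lemma count_parts (p : Σ k, (Fin k → ℕ)) (j : Fin p.1) :
    (parts p).count ((j : ℕ) + 1) = p.2 j + extra p.1 j := by
  rw [parts, Multiset.count_sum', Finset.sum_eq_single j]
  · simp
  · intro i _ hij
    rw [Multiset.count_replicate, if_neg]
    intro h
    exact hij (Fin.ext (by omega))
  · simp

lemma mem_parts_bound {p : Σ k, (Fin k → ℕ)} {i : ℕ} (h : i ∈ parts p) : 0 < i ∧ i ≤ p.1 := by
  rw [parts, Multiset.mem_sum] at h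
  obtain ⟨j, _, hj⟩ := h
  have := Multiset.eq_of_mem_replicate hj
  have := j.2
  omega

lemma sup_parts (p : Σ k, (Fin k → ℕ)) : (parts p).sup = p.1 := by
  apply le_antisymm
  · exact Multiset.sup_le.2 fun i hi => (mem_parts_bound hi).2
  · rcases p with ⟨_ | k, f⟩
    · simp
    · refine Multiset.le_sup (s := parts ⟨k + 1, f⟩) (Multiset.count_pos.1 ?_)
      have := count_parts ⟨k + 1, f⟩ (Fin.last k)
      simp only [Fin.val_last] at this
      rw [this]
      simp [extra]

lemma sum_parts (p : Σ k, (Fin k → ℕ)) :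
    (parts p).sum = ∑ j : Fin p.1, ((j : ℕ) + 1) * (p.2 j + extra p.1 j) := by
  rw [parts, Multiset.sum_sum]
  simp [mul_comm]

/-- The partition with multiset of parts `parts p`. -/
def toPartition (p : Σ k, (Fin k → ℕ)) : (parts p).sum.Partition :=
  ⟨parts p, fun h => (mem_parts_bound h).1, rfl⟩

/-- A multiplicity vector, as a partition filed under its size and number of missing integers. -/
def toIndexed (p : Σ k, (Fin k → ℕ)) :
    Σ x : ℕ × ℕ, {π : x.1.Partition // missingCount π = x.2} :=
  ⟨((parts p).sum, missingCount (toPartition p)), toPartition p, rfl⟩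

lemma parts_injective : Function.Injective parts := by
  intro p p' h
  have hk : p.1 = p'.1 := by rw [← sup_parts p, h, sup_parts]
  obtain ⟨k, f⟩ := p
  obtain ⟨k', f'⟩ := p'
  obtain rfl : k = k' := hk
  congr 1
  funext j
  have h1 := count_parts ⟨k, f⟩ j
  have h2 := count_parts ⟨k, f'⟩ j
  rw [h, h2] at h1
  simpa using h1.symm

lemma exists_parts (s : Multiset ℕ) (hs : ∀ i ∈ s, 0 < i) : ∃ p, parts p = s := by
  refine ⟨⟨s.sup, fun j => s.count ((j : ℕ) + 1) - extra s.sup j⟩, ?_⟩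
  have hex (j : Fin s.sup) : extra s.sup j ≤ s.count ((j : ℕ) + 1) := by
    unfold extra
    split_ifs with h
    · rw [h, Nat.succ_le_iff, Multiset.count_pos]
      by_contra hmem
      -- otherwise every part is at most `s.sup - 1`, which bounds the supremum
      have : s.sup ≤ j := Multiset.sup_le.2 fun i hi => by
        have h1 := Multiset.le_sup hi
        have h2 : i ≠ s.sup := fun h => hmem (h ▸ hi)
        omega
      omega
    · simp
  ext i
  by_cases hi : 0 < i ∧ i ≤ s.sup
  · obtain ⟨j, rfl⟩ : ∃ j, i = j + 1 := ⟨i - 1, by omega⟩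
    have hj : j < s.sup := by omega
    have := count_parts ⟨s.sup, fun j => s.count ((j : ℕ) + 1) - extra s.sup j⟩ ⟨j, hj⟩
    dsimp only at this
    rw [this]
    exact Nat.sub_add_cancel (hex ⟨j, by omega⟩)
  · rw [Multiset.count_eq_zero_of_notMem fun h => hi (mem_parts_bound h),
      Multiset.count_eq_zero_of_notMem fun h => hi ⟨hs i h, Multiset.le_sup h⟩]

/-- A partition is determined by its largest part `k` and its multiplicities at `1, …, k`, where
one occurrence of `k` is split off. -/
lemma toIndexed_bijective : Function.Bijective toIndexed := by
  constructor
  · intro p p' h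
    exact parts_injective (congrArg (fun y => y.2.1.parts) h)
  · rintro ⟨⟨n, m⟩, ⟨s, hs, hsum⟩, hm⟩
    obtain ⟨p, rfl⟩ := exists_parts s fun i hi => hs hi
    dsimp only at hsum hm
    subst hsum hm
    exact ⟨p, rfl⟩

lemma wt_toIndexed {𝕜 : Type*} [RCLike 𝕜] (w q : 𝕜) (p : Σ k, (Fin k → ℕ)) :
    w ^ (toIndexed p).1.2 * q ^ (toIndexed p).1.1 =
      ∏ j : Fin p.1, wt w q (j + 1) (p.2 j + extra p.1 j) := by
  have hsup : (parts p).sup = p.1 := sup_parts p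
  have hmiss : w ^ missingCount (toPartition p) =
      ∏ j : Fin p.1, (if p.2 j + extra p.1 j = 0 then w else 1) := by
    have h1 : ∏ j : Fin p.1, (if p.2 j + extra p.1 j = 0 then w else 1) =
        ∏ j : Fin p.1, (if (j : ℕ) + 1 ∉ parts p then w else 1) := by
      refine Finset.prod_congr rfl fun j _ => ?_
      simp only [← count_parts, Multiset.count_eq_zero]
    rw [h1, Fin.prod_univ_eq_prod_range (fun j => if j + 1 ∉ parts p then w else 1),
      missingCount, ← Finset.prod_const, Finset.prod_filter]
    change ∏ i ∈ Finset.Ico 1 (parts p).sup, (if i ∉ parts p then w else 1) = _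
    rw [hsup]
    rcases hp : p.1 with _ | k
    · simp
    · -- the top value `k + 1` occurs, so the last factor is `1`
      have hmem : k + 1 ∈ parts p := by
        have := count_parts p ⟨k, by omega⟩
        simp only [extra, hp, if_true] at this
        exact Multiset.count_pos.1 (by omega)
      rw [Finset.prod_range_succ, Finset.prod_Ico_eq_prod_range]
      simp [hmem, add_comm]
  change w ^ missingCount (toPartition p) * q ^ (parts p).sum = _
  rw [hmiss, sum_parts, ← Finset.prod_pow_eq_pow_sum, ← Finset.prod_mul_distrib]
  refine Finset.prod_congr rfl fun j _ => ?_
  unfold wt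
  split_ifs with h <;> simp [h]

end Bijection

end MissingIntegers

open MissingIntegers in
theorem statement0 (w q : ℂ) (hq : ‖q‖ < 1) (hwq : ‖w * q‖ < 1) :
    ∑' p : ℕ × ℕ, (Pcount p.1 p.2 : ℂ) * w ^ p.2 * q ^ p.1 =
      (∏' j : ℕ, (1 - (w - 1) * q ^ (j + 1))) / ∏' j : ℕ, (1 - w * q ^ (j + 1)) := by
  rw [← qBinomial hq hwq]
  have h := hasSum_vectors hq hwq
  simp only [← wt_toIndexed] at h
  have h' := (Equiv.hasSum_iff (Equiv.ofBijective _ toIndexed_bijective)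
    (f := fun y : Σ x : ℕ × ℕ, {π : x.1.Partition // missingCount π = x.2} =>
      w ^ y.1.2 * q ^ y.1.1)).1 h
  refine (h'.sigma fun x => ?_).tsum_eq
  have := hasSum_fintype
    (fun _ : {π : x.1.Partition // missingCount π = x.2} => w ^ x.2 * q ^ x.1)
  simpa [Pcount, mul_assoc] using this
end

section
/- The sum over n ≥ 0 of (M_e(n) - M_o(n)) q^n equals (-2q;q)_∞ / (-q;q)_∞, where M_e(n) and M_o(n) denote the number of partitions of n with an even, respectively odd, number of missing integers. -/
/-- The number of partitions of `n` with an even number of missing integers. -/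
def Me (n : ℕ) : ℕ := Fintype.card {π : n.Partition // Even (missingCount π)}

/-- The number of partitions of `n` with an odd number of missing integers. -/
def Mo (n : ℕ) : ℕ := Fintype.card {π : n.Partition // Odd (missingCount π)}

open Filter Topology Finset

/-- The coefficient `(a; q)_N / (q; q)_N` of the `q`-binomial series. -/
noncomputable def qCoeff {𝕜 : Type*} [RCLike 𝕜] (a q : 𝕜) (N : ℕ) : 𝕜 :=
  ∏ k ∈ range N, (1 - a * q ^ k) / (1 - q ^ (k + 1))

/-! ### The q-binomial theorem -/

section qBinomial

variable {𝕜 : Type*} [RCLike 𝕜]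

lemma norm_pow_succ_lt_one {q : 𝕜} (hq : ‖q‖ < 1) (n : ℕ) : ‖q ^ (n + 1)‖ < 1 := by
  rw [norm_pow]
  exact pow_lt_one₀ (norm_nonneg _) hq n.succ_ne_zero

lemma one_sub_pow_succ_ne_zero {q : 𝕜} (hq : ‖q‖ < 1) (n : ℕ) : 1 - q ^ (n + 1) ≠ 0 := by
  intro h
  have h1 := norm_pow_succ_lt_one hq n
  rw [← sub_eq_zero.mp h] at h1
  simp at h1

lemma summable_qCoeff (a : 𝕜) {q z : 𝕜} (hq : ‖q‖ < 1) (hz : ‖z‖ < 1) :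
    Summable fun N => qCoeff a q N * z ^ N := by
  obtain ⟨r, hr, hr1⟩ := exists_between hz
  have hpow : Tendsto (fun n : ℕ => q ^ n) atTop (𝓝 0) :=
    tendsto_pow_atTop_nhds_zero_of_norm_lt_one hq
  have hlim : Tendsto (fun n : ℕ => ‖(1 - a * q ^ n) / (1 - q ^ (n + 1)) * z‖) atTop
      (𝓝 ‖(1 - a * 0) / (1 - 0) * z‖) := by
    refine Tendsto.norm (Tendsto.mul_const _ (Tendsto.div ?_ ?_ (by simp)))
    · exact tendsto_const_nhds.sub (hpow.const_mul a)
    · exact tendsto_const_nhds.sub ((tendsto_add_atTop_iff_nat 1).mpr hpow)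
  have hev := hlim.eventually_le_const (u := r) (by simpa using hr)
  refine summable_of_ratio_norm_eventually_le hr1 ?_
  filter_upwards [hev] with n hn
  have : qCoeff a q (n + 1) * z ^ (n + 1) =
      ((1 - a * q ^ n) / (1 - q ^ (n + 1)) * z) * (qCoeff a q n * z ^ n) := by
    rw [qCoeff, prod_range_succ, ← qCoeff]; ring
  rw [this, norm_mul]
  gcongr

/-- The functional equation `(1 - z) F(z) = (1 - a z) F(q z)` of the `q`-binomial series `F`. -/
lemma qBinomial_step (a : 𝕜) {q z : 𝕜} (hq : ‖q‖ < 1) (hz : ‖z‖ < 1) :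
    (1 - z) * ∑' N, qCoeff a q N * z ^ N =
      (1 - a * z) * ∑' N, qCoeff a q N * (z * q) ^ N := by
  have hzq : ‖z * q‖ < 1 := by
    rw [norm_mul]; exact mul_lt_one_of_nonneg_of_lt_one_left (norm_nonneg _) hz hq.le
  have h1 := summable_qCoeff a hq hz
  have h2 := summable_qCoeff a hq hzq
  have key : ∑' N, (qCoeff a q N * z ^ N - qCoeff a q N * (z * q) ^ N) =
      ∑' N, (z * (qCoeff a q N * z ^ N) - a * z * (qCoeff a q N * (z * q) ^ N)) := by
    rw [(h1.sub h2).tsum_eq_zero_add]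
    simp only [pow_zero, sub_self, zero_add]
    refine tsum_congr fun N => ?_
    rw [qCoeff, prod_range_succ, ← qCoeff]
    have := one_sub_pow_succ_ne_zero hq N
    field_simp
    ring
  rw [h1.tsum_sub h2, (h1.mul_left z).tsum_sub (h2.mul_left (a * z)), tsum_mul_left,
    tsum_mul_left] at key
  linear_combination key

lemma multipliable_one_sub_mul_pow (a : 𝕜) {q : 𝕜} (hq : ‖q‖ < 1) :
    Multipliable fun k : ℕ => 1 - a * q ^ k := by
  have : Summable fun k : ℕ => ‖-(a * q ^ k)‖ := by
    simp only [norm_neg, norm_mul, norm_pow]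
    exact (summable_geometric_of_lt_one (norm_nonneg _) hq).mul_left _
  simpa [sub_eq_add_neg] using multipliable_one_add_of_summable this

/-- The `q`-binomial theorem, with the denominator cleared. -/
lemma qBinomial (a : 𝕜) {q z : 𝕜} (hq : ‖q‖ < 1) (hz : ‖z‖ < 1) :
    (∏' k : ℕ, (1 - z * q ^ k)) * ∑' N, qCoeff a q N * z ^ N =
      ∏' k : ℕ, (1 - a * z * q ^ k) := by
  have hle (n : ℕ) : ‖z * q ^ n‖ ≤ ‖z‖ := by
    rw [norm_mul, norm_pow]
    exact mul_le_of_le_one_right (norm_nonneg _) (pow_le_one₀ (norm_nonneg _) hq.le)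
  have hiter (n : ℕ) : (∏ k ∈ range n, (1 - z * q ^ k)) * ∑' N, qCoeff a q N * z ^ N =
      (∏ k ∈ range n, (1 - a * z * q ^ k)) * ∑' N, qCoeff a q N * (z * q ^ n) ^ N := by
    induction n with
    | zero => simp
    | succ n ih =>
      have := qBinomial_step a hq ((hle n).trans_lt hz)
      rw [prod_range_succ, prod_range_succ, pow_succ, ← mul_assoc z]
      linear_combination (1 - z * q ^ n) * ih +
        (∏ k ∈ range n, (1 - a * z * q ^ k)) * this
  have hF : Tendsto (fun n : ℕ => ∑' N, qCoeff a q N * (z * q ^ n) ^ N) atTop (𝓝 1) := by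
    have h0 : ∑' N, qCoeff a q N * (0 : 𝕜) ^ N = 1 := by
      rw [tsum_eq_single 0]
      · simp [qCoeff]
      · intro N hN; simp [hN]
    rw [← h0]
    refine tendsto_tsum_of_dominated_convergence
      (bound := fun N => ‖qCoeff a q N * z ^ N‖) (summable_qCoeff a hq hz).norm ?_ ?_
    · intro N
      refine Tendsto.const_mul _ (Tendsto.pow ?_ N)
      simpa using (tendsto_pow_atTop_nhds_zero_of_norm_lt_one hq).const_mul z
    · refine Eventually.of_forall fun n N => ?_
      rw [norm_mul, norm_mul, norm_pow, norm_pow z]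
      gcongr
      exact hle n
  have hL := ((multipliable_one_sub_mul_pow z hq).hasProd.tendsto_prod_nat).mul_const
    (∑' N, qCoeff a q N * z ^ N)
  have hR := ((multipliable_one_sub_mul_pow (a * z) hq).hasProd.tendsto_prod_nat).mul hF
  rw [mul_one] at hR
  exact tendsto_nhds_unique hL (hR.congr fun n => (hiter n).symm)

/-- Euler's expansion of `1 / (z; q)_∞`, the case `a = 0` of `qBinomial`, shows that this infinite
product does not vanish. -/
lemma tprod_one_sub_mul_pow_ne_zero {q z : 𝕜} (hq : ‖q‖ < 1) (hz : ‖z‖ < 1) :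
    ∏' k : ℕ, (1 - z * q ^ k) ≠ 0 := by
  have h := qBinomial 0 hq hz
  simp only [zero_mul, sub_zero, tprod_one] at h
  exact left_ne_zero_of_mul_eq_one h

end qBinomial

/-! ### Generating functions of partitions by missing integers -/

section Combinatorics

/-- The number of positive integers less than `m` that do not occur in `s`. -/
def missBelow (m : ℕ) (s : Multiset ℕ) : ℕ := #{j ∈ Ico 1 m | j ∉ s}

/-- Partitions, of any size, with all parts at most `N`. -/
abbrev BddParts (N : ℕ) := {s : Multiset ℕ // ∀ i ∈ s, 0 < i ∧ i ≤ N}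

/-- Partitions of any size. -/
abbrev AnyParts := {s : Multiset ℕ // ∀ i ∈ s, 0 < i}

lemma BddParts.succ_notMem {N : ℕ} (s : BddParts N) : N + 1 ∉ s.1 := fun h => by
  have := (s.2 _ h).2
  omega

lemma filter_ne_replicate_add {N : ℕ} (s : BddParts N) (k : ℕ) :
    (Multiset.replicate k (N + 1) + s.1).filter (fun i => ¬ i = N + 1) = s.1 := by
  have h2 : s.1.filter (fun i => ¬ i = N + 1) = s.1 :=
    Multiset.filter_eq_self.mpr fun i hi h => s.succ_notMem (h ▸ hi)
  have h1 : (Multiset.replicate k (N + 1)).filter (fun i => ¬ i = N + 1) = 0 :=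
    Multiset.filter_eq_nil.mpr fun i hi h => h (Multiset.eq_of_mem_replicate hi)
  rw [Multiset.filter_add, h1, h2, zero_add]

lemma count_replicate_add {N : ℕ} (s : BddParts N) (k : ℕ) :
    (Multiset.replicate k (N + 1) + s.1).count (N + 1) = k := by
  rw [Multiset.count_add, Multiset.count_replicate_self,
    Multiset.count_eq_zero_of_notMem s.succ_notMem, add_zero]

lemma replicate_count_add_filter (N : ℕ) (s : Multiset ℕ) :
    Multiset.replicate (s.count (N + 1)) (N + 1) + s.filter (fun i => ¬ i = N + 1) = s := by
  rw [← Multiset.filter_eq', Multiset.filter_add_not]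

/-- A partition with parts at most `N + 1` is determined by the multiplicity of `N + 1` and by its
smaller parts. -/
def splitLargest (N : ℕ) : ℕ × BddParts N ≃ BddParts (N + 1) where
  toFun p := ⟨Multiset.replicate p.1 (N + 1) + p.2.1, fun i hi => by
    rcases Multiset.mem_add.mp hi with h | h
    · rw [Multiset.eq_of_mem_replicate h]; omega
    · have := p.2.2 i h; omega⟩
  invFun s := ⟨s.1.count (N + 1), s.1.filter (fun i => ¬ i = N + 1), fun i hi => by
    rw [Multiset.mem_filter] at hi
    have := s.2 i hi.1
    omega⟩
  left_inv p := Prod.ext (count_replicate_add _ _) (Subtype.ext (filter_ne_replicate_add _ _))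
  right_inv s := Subtype.ext (replicate_count_add_filter N s.1)

/-- A partition with largest part exactly `N + 1` is determined by the positive multiplicity `k + 1`
of `N + 1` and by its smaller parts. -/
def splitSup (N : ℕ) : ℕ × BddParts N ≃ {s : AnyParts // s.1.sup = N + 1} where
  toFun p := ⟨⟨Multiset.replicate (p.1 + 1) (N + 1) + p.2.1, fun i hi =>
      ((splitLargest N (p.1 + 1, p.2)).2 i hi).1⟩, by
    refine le_antisymm (Multiset.sup_le.mpr fun i hi =>
      ((splitLargest N (p.1 + 1, p.2)).2 i hi).2) (Multiset.le_sup ?_)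
    simp [Multiset.mem_replicate]⟩
  invFun s := ⟨s.1.1.count (N + 1) - 1, s.1.1.filter (fun i => ¬ i = N + 1), fun i hi => by
    rw [Multiset.mem_filter] at hi
    have h1 := s.1.2 i hi.1
    have h2 := Multiset.le_sup hi.1
    rw [s.2] at h2
    omega⟩
  left_inv p := Prod.ext (by simp only [count_replicate_add]; rfl)
    (Subtype.ext (filter_ne_replicate_add _ _))
  right_inv s := by
    refine Subtype.ext (Subtype.ext ?_)
    have hmem : N + 1 ∈ s.1.1 := by
      by_contra h
      have : s.1.1.sup ≤ N := Multiset.sup_le.mpr fun i hi => by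
        have h1 := Multiset.le_sup hi
        rw [s.2] at h1
        have h2 : i ≠ N + 1 := fun h' => h (h' ▸ hi)
        omega
      rw [s.2] at this
      omega
    have hc : s.1.1.count (N + 1) - 1 + 1 = s.1.1.count (N + 1) :=
      Nat.sub_add_cancel (Multiset.one_le_count_iff_mem.mpr hmem)
    simp only [hc]
    exact replicate_count_add_filter N s.1.1

lemma missBelow_replicate_add (N k : ℕ) (s : Multiset ℕ) :
    missBelow (N + 1) (Multiset.replicate k (N + 1) + s) = missBelow (N + 1) s := by
  refine congrArg card (filter_congr fun j hj => ?_)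
  have : j ≠ N + 1 := by rw [mem_Ico] at hj; omega
  simp [Multiset.mem_replicate, this]

lemma missBelow_succ {N : ℕ} (k : ℕ) (s : BddParts N) :
    missBelow (N + 2) (Multiset.replicate k (N + 1) + s.1) =
      (if k = 0 then 1 else 0) + missBelow (N + 1) s.1 := by
  have hs := s.succ_notMem
  have hI : Ico 1 (N + 2) = insert (N + 1) (Ico 1 (N + 1)) := by
    ext j
    simp only [mem_insert, mem_Ico]
    omega
  rw [← missBelow_replicate_add N k s.1, missBelow, missBelow, hI, filter_insert]
  by_cases hk : k = 0
  · subst hk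
    simp [hs, add_comm]
  · simp [Multiset.mem_replicate, hk]

variable {𝕜 : Type*} [RCLike 𝕜]

lemma hasSum_pow_succ {q : 𝕜} (hq : ‖q‖ < 1) :
    HasSum (fun k : ℕ => q ^ (k + 1)) (q / (1 - q)) := by
  simpa [pow_succ', div_eq_mul_inv] using (hasSum_geometric_of_norm_lt_one hq).mul_left q

lemma HasSum.mul_prod {ι κ : Type*} {f : ι → 𝕜} {g : κ → 𝕜} {a b : 𝕜} (hf : HasSum f a)
    (hg : HasSum g b) : HasSum (fun p : ι × κ => f p.1 * g p.2) (a * b) :=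
  hf.mul hg (summable_mul_of_summable_norm hf.summable.norm hg.summable.norm)

/-- Each `j ≤ N` contributes a factor `x` if it is missing and `q ^ j + q ^ (2 * j) + ⋯` if it
occurs. -/
lemma hasSum_bddParts (x : 𝕜) {q : 𝕜} (hq : ‖q‖ < 1) (N : ℕ) :
    HasSum (fun s : BddParts N => x ^ missBelow (N + 1) s.1 * q ^ s.1.sum)
      (∏ j ∈ range N, (x + q ^ (j + 1) / (1 - q ^ (j + 1)))) := by
  induction N with
  | zero =>
    have h0 (s : BddParts 0) : s.1 = 0 := Multiset.eq_zero_of_forall_notMem fun i hi => by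
      have := s.2 i hi
      omega
    have : Unique (BddParts 0) := ⟨⟨⟨0, by simp⟩⟩, fun s => Subtype.ext (h0 s)⟩
    simp [h0, missBelow]
  | succ N ih =>
    have hu : HasSum (fun k : ℕ => x ^ (if k = 0 then 1 else 0) * (q ^ (N + 1)) ^ k)
        (q ^ (N + 1) / (1 - q ^ (N + 1)) + x) := by
      refine (hasSum_nat_add_iff' 1).mp ?_
      simpa using hasSum_pow_succ (norm_pow_succ_lt_one hq N)
    rw [prod_range_succ, mul_comm, add_comm x (q ^ (N + 1) / _), ← (splitLargest N).hasSum_iff]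
    refine (hu.mul_prod ih).congr_fun ?_
    rintro ⟨k, s⟩
    simp only [Function.comp, splitLargest, Equiv.coe_fn_mk, missBelow_succ, Multiset.sum_add,
      Multiset.sum_replicate, smul_eq_mul]
    ring

/-- The generating function of the partitions with largest part `N + 1` by size and number of
missing integers. -/
lemma hasSum_sup (x : 𝕜) {q : 𝕜} (hq : ‖q‖ < 1) (N : ℕ) :
    HasSum (fun s : {s : AnyParts // s.1.sup = N + 1} =>
        x ^ missBelow s.1.1.sup s.1.1 * q ^ s.1.1.sum)
      (q ^ (N + 1) / (1 - q ^ (N + 1)) *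
        ∏ j ∈ range N, (x + q ^ (j + 1) / (1 - q ^ (j + 1)))) := by
  rw [← (splitSup N).hasSum_iff]
  refine ((hasSum_pow_succ (norm_pow_succ_lt_one hq N)).mul_prod
    (hasSum_bddParts x hq N)).congr_fun ?_
  rintro ⟨k, s⟩
  rw [Function.comp, (splitSup N (k, s)).2]
  simp only [splitSup, Equiv.coe_fn_mk, missBelow_replicate_add, Multiset.sum_add,
      Multiset.sum_replicate, smul_eq_mul]
  ring

lemma hasSum_sup_zero (x q : 𝕜) :
    HasSum (fun s : {s : AnyParts // s.1.sup = 0} =>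
        x ^ missBelow s.1.1.sup s.1.1 * q ^ s.1.1.sum) 1 := by
  have h0 (s : {s : AnyParts // s.1.sup = 0}) : s.1.1 = 0 :=
    Multiset.eq_zero_of_forall_notMem fun i hi => by
      have h1 := s.1.2 i hi
      have h2 := Multiset.le_sup hi
      rw [s.2] at h2
      simp at h2
      omega
  have : Unique {s : AnyParts // s.1.sup = 0} :=
    ⟨⟨⟨⟨0, by simp⟩, by simp⟩⟩, fun s => Subtype.ext (Subtype.ext (h0 s))⟩
  simp [h0, missBelow]

/-- Counted without signs, the partitions with largest part `N` give the `N`-th term of the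
`q`-binomial series with `a = 0` and `z = q`. -/
lemma hasSum_sup_one {q : 𝕜} (hq : ‖q‖ < 1) (N : ℕ) :
    HasSum (fun s : {s : AnyParts // s.1.sup = N} => q ^ s.1.1.sum) (qCoeff 0 q N * q ^ N) := by
  cases N with
  | zero => simpa [qCoeff] using hasSum_sup_zero 1 q
  | succ N =>
    have h := hasSum_sup 1 hq N
    simp only [one_pow, one_mul] at h
    convert h using 1
    have : ∀ j ∈ range N, 1 + q ^ (j + 1) / (1 - q ^ (j + 1)) =
        (1 - 0 * q ^ j) / (1 - q ^ (j + 1)) := fun j _ => by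
      have := one_sub_pow_succ_ne_zero hq j
      field_simp
      ring
    rw [prod_congr rfl this, qCoeff, prod_range_succ]
    ring

/-- Counted with the sign `-1` for each missing integer, the partitions with largest part `N` give the
`N`-th term of the `q`-binomial series with `a = 2` and `z = -q`. The factor `1 - a = -1` of `(a; q)_N`
accounts for one of the `N` signs in `(-q) ^ N`. -/
lemma hasSum_sup_neg_one {q : 𝕜} (hq : ‖q‖ < 1) (N : ℕ) :
    HasSum (fun s : {s : AnyParts // s.1.sup = N} =>
      (-1) ^ missBelow s.1.1.sup s.1.1 * q ^ s.1.1.sum) (qCoeff 2 q N * (-q) ^ N) := by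
  cases N with
  | zero => simpa [qCoeff] using hasSum_sup_zero (-1) q
  | succ N =>
    convert hasSum_sup (-1) hq N using 1
    have : ∀ j ∈ range N, -1 + q ^ (j + 1) / (1 - q ^ (j + 1)) =
        (-1) * ((1 - 2 * q ^ (j + 1)) / (1 - q ^ (j + 1))) := fun j _ => by
      have := one_sub_pow_succ_ne_zero hq j
      field_simp
      ring
    rw [prod_congr rfl this, prod_mul_distrib, prod_const, card_range, prod_div_distrib, qCoeff,
      prod_div_distrib, prod_range_succ', prod_range_succ (fun k => 1 - q ^ (k + 1)), neg_pow]
    have := one_sub_pow_succ_ne_zero hq N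
    have h2 : ∏ k ∈ range N, (1 - q ^ (k + 1)) ≠ 0 :=
      prod_ne_zero_iff.mpr fun j _ => one_sub_pow_succ_ne_zero hq j
    field_simp
    ring

lemma norm_neg_one_pow_mul (m n : ℕ) (q : 𝕜) : ‖(-1) ^ m * q ^ n‖ = ‖q‖ ^ n := by
  simp

/-- The signed generating function of all partitions; absolute convergence comes from the unsigned
one, evaluated at `‖q‖`. -/
lemma hasSum_anyParts {q : 𝕜} (hq : ‖q‖ < 1) :
    HasSum (fun s : AnyParts => (-1) ^ missBelow s.1.sup s.1 * q ^ s.1.sum)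
      (∑' N, qCoeff 2 q N * (-q) ^ N) := by
  have hr : ‖‖q‖‖ < 1 := by simpa using hq
  have habs : Summable fun s : AnyParts => ‖q‖ ^ s.1.sum := by
    rw [← (Equiv.sigmaFiberEquiv fun s : AnyParts => s.1.sup).summable_iff]
    refine (summable_sigma_of_nonneg fun _ => by simp only [Function.comp]; positivity).mpr
      ⟨fun N => (hasSum_sup_one hr N).summable, ?_⟩
    exact (summable_qCoeff 0 hr hr).congr fun N => (hasSum_sup_one hr N).tsum_eq.symm
  have hsum : Summable fun s : AnyParts => (-1) ^ missBelow s.1.sup s.1 * q ^ s.1.sum :=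
    Summable.of_norm (by simpa only [norm_neg_one_pow_mul] using habs)
  have h := ((Equiv.sigmaFiberEquiv fun s : AnyParts => s.1.sup).hasSum_iff.mpr hsum.hasSum).sigma
    (fun N => hasSum_sup_neg_one hq N)
  rw [h.tsum_eq]
  exact hsum.hasSum

/-- Partitions of `n` as multisets of positive integers with sum `n`. -/
def partitionEquiv (n : ℕ) : n.Partition ≃ {s : AnyParts // s.1.sum = n} where
  toFun π := ⟨⟨π.parts, fun _ hi => π.parts_pos hi⟩, π.parts_sum⟩
  invFun s := ⟨s.1.1, fun {i} hi => s.1.2 i hi, s.2⟩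
  left_inv _ := rfl
  right_inv _ := rfl

lemma Me_sub_Mo (n : ℕ) :
    (Me n : 𝕜) - (Mo n : 𝕜) = ∑ π : n.Partition, (-1) ^ missingCount π := by
  have (π : n.Partition) : (-1 : 𝕜) ^ missingCount π =
      (if Even (missingCount π) then 1 else 0) - (if Odd (missingCount π) then 1 else 0) := by
    rcases Nat.even_or_odd (missingCount π) with h | h
    · simp [h, Nat.not_odd_iff_even.mpr h]
    · simp [h, Nat.not_even_iff_odd.mpr h]
  simp only [this, sum_sub_distrib, sum_boole, Me, Mo, Fintype.card_subtype]

lemma hasSum_Me_sub_Mo {q : 𝕜} (hq : ‖q‖ < 1) :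
    HasSum (fun n => ((Me n : 𝕜) - (Mo n : 𝕜)) * q ^ n) (∑' N, qCoeff 2 q N * (-q) ^ N) := by
  refine ((Equiv.sigmaFiberEquiv fun s : AnyParts => s.1.sum).hasSum_iff.mpr
    (hasSum_anyParts hq)).sigma fun n => ?_
  rw [← (partitionEquiv n).hasSum_iff, Me_sub_Mo, sum_mul]
  refine (hasSum_fintype _).congr_fun fun π => ?_
  simp only [Function.comp, Equiv.sigmaFiberEquiv, partitionEquiv, Equiv.coe_fn_mk, π.parts_sum]
  rfl

end Combinatorics

theorem statement4 (q : ℂ) (hq : ‖q‖ < 1) :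
    ∑' n : ℕ, ((Me n : ℂ) - (Mo n : ℂ)) * q ^ n =
      (∏' k : ℕ, (1 + 2 * q ^ (k + 1))) / ∏' k : ℕ, (1 + q ^ (k + 1)) := by
  have hz : ‖-q‖ < 1 := by rwa [norm_neg]
  have h1 (k : ℕ) : 1 + q ^ (k + 1) = 1 - -q * q ^ k := by ring
  have h2 (k : ℕ) : 1 + 2 * q ^ (k + 1) = 1 - 2 * -q * q ^ k := by ring
  simp only [h1, h2]
  rw [(hasSum_Me_sub_Mo hq).tsum_eq, eq_div_iff (tprod_one_sub_mul_pow_ne_zero hq hz), mul_comm]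
  exact qBinomial 2 hq hz
end

section
/- For every positive integer k, the number of distinct positive integers less than or equal to the largest part appearing with multiplicity less than k, summed over all partitions of n, equals the total number of parts different from k over all partitions of n. Equivalently, ∑_{n≥0} ν_{D,<k}(n) q^n = (1/(q;q)_∞) ∑_{m≥1, m≠k} q^m/(1-q^m). -/
/-!
Write `ℓ(π)` for the largest part of `π`. Among the integers `1 ≤ j ≤ ℓ(π)`, those with multiplicity
less than `k` number `ℓ(π)` minus the number of `j ≥ 1` with multiplicity at least `k`. Likewise the
number of parts of `π` different from `k` is the number of all parts minus the multiplicity of `k`.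

* The sum of `ℓ(π)` over the partitions of `n` equals the sum of the number of parts, by conjugation
  (`sum_sup_eq_sum_card`).
* Removing `i` copies of a part `m` shows that `p(n - i * m)` partitions of `n` contain `m` at least
  `i` times (`sum_remove`), an expression symmetric in `i` and `m`. Hence the pairs `(π, j)` with `j`
  occurring at least `k` times in `π` are equinumerous with the pairs `(π, j)` with `k` occurring
  at least `j ≥ 1` times in `π` (`card_count_symm`). The latter number is the total multiplicity
  of `k`.

For the generating function, removing one part gives recurrences of the form
`a n = b n + a (n - m)`, so that the series of `a` is that of `b` divided by `1 - q ^ m`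
(`hasSum_rec`). Applied to partitions with parts at most `M`, and with dominated convergence as
`M → ∞`, this gives Euler's product for the partition numbers (`hasSum_numPart`). Applied to the
occurrences of `m`, it gives `q ^ m / (1 - q ^ m)` times that series (`hasSum_numOcc`). Summing over
`m ≠ k` and exchanging the two absolutely convergent sums gives the claim.
-/


/-- `nuLt k π` is the number of distinct positive integers less than or equal to the
largest part of `π` which occur in `π` with multiplicity strictly less than `k`. -/
def nuLt (k : ℕ) {n : ℕ} (π : n.Partition) : ℕ :=
  ((Finset.Icc 1 π.parts.sup).filter (fun j => π.parts.count j < k)).card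

/-- The number of partitions of `n`. -/
def numPart (n : ℕ) : ℕ := ∑ _π : n.Partition, 1

/-- The number of partitions of `n` all of whose parts are at most `M`. -/
def numPartLe (M n : ℕ) : ℕ := ∑ π : n.Partition, if ∀ a ∈ π.parts, a ≤ M then 1 else 0

/-- The number of occurrences of `m` as a part, over all partitions of `n`. -/
def numOcc (m n : ℕ) : ℕ := ∑ π : n.Partition, π.parts.count m

/-! ### Conjugation -/

theorem sum_rowLens (μ : YoungDiagram) : μ.rowLens.sum = μ.card := by
  have h : μ.card = ∑ i ∈ Finset.range (μ.colLen 0), (μ.row i).card := by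
    refine Finset.card_eq_sum_card_fiberwise (f := Prod.fst) ?_
    rintro ⟨i, j⟩ hc
    have hc' : (i, j) ∈ μ := by simpa using hc
    simpa using YoungDiagram.mem_iff_lt_colLen.1 (μ.up_left_mem le_rfl (Nat.zero_le j) hc')
  rw [h]
  simp only [← YoungDiagram.rowLen_eq_card]
  rfl

theorem sup_rowLens (μ : YoungDiagram) : (μ.rowLens : Multiset ℕ).sup = μ.rowLen 0 := by
  apply le_antisymm
  · refine Multiset.sup_le.2 fun b hb => ?_
    obtain ⟨i, -, rfl⟩ := List.mem_map.1 (Multiset.mem_coe.1 hb)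
    exact μ.rowLen_anti 0 i (Nat.zero_le i)
  · rcases Nat.eq_zero_or_pos (μ.rowLen 0) with h | h
    · simp [h]
    · refine Multiset.le_sup (Multiset.mem_coe.2 (List.mem_map.2 ⟨0, ?_, rfl⟩))
      rw [List.mem_range, ← YoungDiagram.mem_iff_lt_colLen, YoungDiagram.mem_iff_lt_rowLen]
      exact h

/-- The Young diagram of a partition: its rows are the parts in weakly decreasing order. -/
def diagram {n : ℕ} (π : n.Partition) : YoungDiagram :=
  YoungDiagram.ofRowLens (π.parts.sort (· ≥ ·)) (Multiset.pairwise_sort _ _).sortedGE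

theorem rowLens_diagram {n : ℕ} (π : n.Partition) :
    (diagram π).rowLens = π.parts.sort (· ≥ ·) :=
  YoungDiagram.rowLens_ofRowLens_eq_self fun _ hx => π.parts_pos ((Multiset.mem_sort _).1 hx)

theorem card_diagram {n : ℕ} (π : n.Partition) : (diagram π).card = n := by
  rw [← sum_rowLens, rowLens_diagram, ← Multiset.sum_coe, Multiset.sort_eq, π.parts_sum]

/-- The conjugate partition, whose parts are the column lengths of the Young diagram. -/
def conj {n : ℕ} (π : n.Partition) : n.Partition where
  parts := ((diagram π).transpose.rowLens : Multiset ℕ)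
  parts_pos h := YoungDiagram.pos_of_mem_rowLens _ _ (Multiset.mem_coe.1 h)
  parts_sum := by
    rw [Multiset.sum_coe, sum_rowLens]
    refine Eq.trans ?_ (card_diagram π)
    simp [YoungDiagram.card, YoungDiagram.transpose]

theorem diagram_conj {n : ℕ} (π : n.Partition) : diagram (conj π) = (diagram π).transpose := by
  apply YoungDiagram.equivListRowLens.injective
  apply Subtype.ext
  change (diagram (conj π)).rowLens = (diagram π).transpose.rowLens
  rw [rowLens_diagram]
  refine List.Perm.eq_of_pairwise' (Multiset.pairwise_sort _ _)
    (YoungDiagram.rowLens_sorted _).pairwise ?_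
  rw [← Multiset.coe_eq_coe, Multiset.sort_eq]
  rfl

theorem conj_conj {n : ℕ} (π : n.Partition) : conj (conj π) = π := by
  ext1
  change ((diagram (conj π)).transpose.rowLens : Multiset ℕ) = π.parts
  rw [diagram_conj, YoungDiagram.transpose_transpose, rowLens_diagram, Multiset.sort_eq]

theorem sup_conj {n : ℕ} (π : n.Partition) : (conj π).parts.sup = π.parts.card := by
  change ((diagram π).transpose.rowLens : Multiset ℕ).sup = _
  rw [sup_rowLens, YoungDiagram.rowLen_transpose, ← YoungDiagram.length_rowLens,
    rowLens_diagram, Multiset.length_sort]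

theorem sum_sup_eq_sum_card (n : ℕ) :
    ∑ π : n.Partition, π.parts.sup = ∑ π : n.Partition, π.parts.card := by
  have hinv : Function.Involutive (conj (n := n)) := conj_conj
  rw [← Equiv.sum_comp hinv.toPerm]
  exact Finset.sum_congr rfl fun π _ => sup_conj π

/-! ### Removing equal parts -/

/-- Removing `i` copies of the part `m` is a bijection from the partitions of `n` that contain `m`
at least `i` times onto the partitions of `n - i * m`. -/
theorem sum_remove (n m i : ℕ) (hm : 0 < m) (F : Multiset ℕ → ℕ) :
    (∑ π : n.Partition, if i ≤ π.parts.count m then F π.parts else 0) =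
      if i * m ≤ n then
        ∑ π : (n - i * m).Partition, F (π.parts + Multiset.replicate i m) else 0 := by
  have key : ∀ π : n.Partition, i ≤ π.parts.count m →
      (π.parts - Multiset.replicate i m) + Multiset.replicate i m = π.parts := fun π h =>
    Multiset.sub_add_cancel (Multiset.le_count_iff_replicate_le.1 h)
  have key2 : ∀ π : n.Partition, i ≤ π.parts.count m →
      (π.parts - Multiset.replicate i m).sum + i * m = n := fun π h => by
    have := congrArg Multiset.sum (key π h)
    simpa [π.parts_sum] using this
  rw [← Finset.sum_filter]
  split_ifs with hn
  · refine Finset.sum_bij'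
      (i := fun π hπ => ⟨π.parts - Multiset.replicate i m,
        fun h => π.parts_pos (Multiset.mem_of_le (Multiset.sub_le_self _ _) h),
        by have := key2 π (Finset.mem_filter.1 hπ).2; omega⟩)
      (j := fun π _ => ⟨π.parts + Multiset.replicate i m,
        fun h => by
          rcases Multiset.mem_add.1 h with h | h
          · exact π.parts_pos h
          · rw [Multiset.eq_of_mem_replicate h]; exact hm,
        by simp [π.parts_sum, hn]⟩) ?_ ?_ ?_ ?_ ?_
    · intros; simp
    · intros; simp
    · intro π hπ
      ext1
      exact key π (Finset.mem_filter.1 hπ).2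
    · intro π _
      ext1
      simp
    · intro π hπ
      simp only
      rw [key π (Finset.mem_filter.1 hπ).2]
  · refine Finset.sum_eq_zero fun π hπ => ?_
    have := key2 π (Finset.mem_filter.1 hπ).2
    omega

/-- By `sum_remove`, the number of partitions of `n` that contain `m` at least `i` times depends on
`i` and `m` only through the product `i * m`. -/
theorem card_count_symm (n i m : ℕ) (hi : 0 < i) (hm : 0 < m) :
    (∑ π : n.Partition, if i ≤ π.parts.count m then 1 else 0) =
      ∑ π : n.Partition, if m ≤ π.parts.count i then 1 else 0 := by
  rw [sum_remove n m i hm fun _ => 1, sum_remove n i m hi fun _ => 1, mul_comm]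

theorem count_le {n : ℕ} (π : n.Partition) (m : ℕ) (hm : 0 < m) : π.parts.count m ≤ n := by
  have h : (Multiset.replicate (π.parts.count m) m).sum ≤ π.parts.sum := by
    obtain ⟨t, ht⟩ := Multiset.le_iff_exists_add.1
      (Multiset.le_count_iff_replicate_le.1 (le_refl (π.parts.count m)))
    conv_rhs => rw [ht]
    simp
  rw [π.parts_sum, Multiset.sum_replicate, smul_eq_mul] at h
  exact (Nat.le_mul_of_pos_right _ hm).trans h

theorem sup_parts_le {n : ℕ} (π : n.Partition) : π.parts.sup ≤ n :=
  Multiset.sup_le.2 fun _ h => π.le_of_mem_parts h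

/-- The integers up to the largest part split into those of multiplicity less than `k` and those of
multiplicity at least `k`. As `k > 0`, the latter are parts, so `j` may range over `1, …, n`. -/
theorem nuLt_add (k : ℕ) (hk : 0 < k) {n : ℕ} (π : n.Partition) :
    nuLt k π + ∑ j ∈ Finset.Icc 1 n, (if k ≤ π.parts.count j then 1 else 0) = π.parts.sup := by
  have h : ∑ j ∈ Finset.Icc 1 n, (if k ≤ π.parts.count j then 1 else 0) =
      ((Finset.Icc 1 π.parts.sup).filter (fun j => ¬ π.parts.count j < k)).card := by
    rw [← Finset.card_filter]
    congr 1
    ext j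
    simp only [Finset.mem_filter, Finset.mem_Icc, not_lt]
    refine ⟨fun ⟨⟨h1, _⟩, h3⟩ => ⟨⟨h1, ?_⟩, h3⟩, fun ⟨⟨h1, h2⟩, h3⟩ => ⟨⟨h1, h2.trans (sup_parts_le π)⟩, h3⟩⟩
    exact Multiset.le_sup (Multiset.count_pos.1 (hk.trans_le h3))
  rw [h, nuLt, Finset.card_filter_add_card_filter_not]
  simp

/-- The multiplicity of `k`, written as the number of `j ≥ 1` that do not exceed it, completes the
number of parts different from `k` to the number of all parts. -/
theorem card_filter_add (k : ℕ) (hk : 0 < k) {n : ℕ} (π : n.Partition) :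
    (π.parts.filter (fun a => a ≠ k)).card +
      ∑ j ∈ Finset.Icc 1 n, (if j ≤ π.parts.count k then 1 else 0) = π.parts.card := by
  have h : ∑ j ∈ Finset.Icc 1 n, (if j ≤ π.parts.count k then 1 else 0) = π.parts.count k := by
    rw [← Finset.card_filter]
    have : (Finset.Icc 1 n).filter (fun j => j ≤ π.parts.count k) =
        Finset.Icc 1 (π.parts.count k) := by
      ext j
      have := count_le π k hk
      simp only [Finset.mem_filter, Finset.mem_Icc]
      omega
    simp [this]
  have h2 := congrArg Multiset.card (Multiset.filter_add_not (fun a => a ≠ k) π.parts)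
  rw [Multiset.card_add] at h2
  rw [h, ← h2, Multiset.count_eq_card_filter_eq]
  simp [eq_comm]

theorem sum_nuLt (k : ℕ) (hk : 0 < k) (n : ℕ) : ∑ π : n.Partition, nuLt k π =
    ∑ π : n.Partition, (π.parts.filter (fun a => a ≠ k)).card := by
  have h1 := Finset.sum_congr rfl fun (π : n.Partition) (_ : π ∈ Finset.univ) => nuLt_add k hk π
  have h2 := Finset.sum_congr rfl
    fun (π : n.Partition) (_ : π ∈ Finset.univ) => card_filter_add k hk π
  rw [Finset.sum_add_distrib, Finset.sum_comm] at h1 h2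
  have h3 := Finset.sum_congr rfl fun j (hj : j ∈ Finset.Icc 1 n) =>
    card_count_symm n k j hk (Finset.mem_Icc.1 hj).1
  have := sum_sup_eq_sum_card n
  omega

/-! ### Recurrences -/

/-- Removing one part `m` from a partition lowers the multiplicity of `m` by one. -/
theorem numOcc_rec (m : ℕ) (hm : 0 < m) (n : ℕ) :
    numOcc m n = (if m ≤ n then numPart (n - m) else 0) +
      if m ≤ n then numOcc m (n - m) else 0 := by
  have h := sum_remove n m 1 hm (fun s => s.count m)
  have h' : numOcc m n = ∑ π : n.Partition,
      if 1 ≤ π.parts.count m then π.parts.count m else 0 :=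
    Finset.sum_congr rfl fun π _ => by split_ifs <;> omega
  rw [h', h, one_mul]
  split_ifs
  · simp [numPart, numOcc, Finset.sum_add_distrib, add_comm]
  · rfl

/-- A partition with parts at most `M + 1` either has no part `M + 1`, or arises by adding a
part `M + 1` to a partition of the same kind. -/
theorem numPartLe_rec (M n : ℕ) :
    numPartLe (M + 1) n = numPartLe M n +
      if M + 1 ≤ n then numPartLe (M + 1) (n - (M + 1)) else 0 := by
  have h := sum_remove n (M + 1) 1 M.succ_pos (fun s => if ∀ a ∈ s, a ≤ M + 1 then 1 else 0)
  have h' : numPartLe (M + 1) n = numPartLe M n + ∑ π : n.Partition,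
      if 1 ≤ π.parts.count (M + 1) then (if ∀ a ∈ π.parts, a ≤ M + 1 then 1 else 0) else 0 := by
    rw [numPartLe, numPartLe, ← Finset.sum_add_distrib]
    refine Finset.sum_congr rfl fun π _ => ?_
    have hiff : (∀ a ∈ π.parts, a ≤ M) ↔
        (∀ a ∈ π.parts, a ≤ M + 1) ∧ ¬ 1 ≤ π.parts.count (M + 1) := by
      rw [Multiset.one_le_count_iff_mem]
      constructor
      · exact fun h => ⟨fun a ha => (h a ha).trans (Nat.le_succ M),
          fun hM => by have := h _ hM; omega⟩
      · rintro ⟨h1, h2⟩ a ha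
        have := h1 a ha
        have : a ≠ M + 1 := fun e => h2 (e ▸ ha)
        omega
    by_cases h1 : ∀ a ∈ π.parts, a ≤ M + 1 <;> by_cases h2 : 1 ≤ π.parts.count (M + 1) <;>
      simp only [hiff, h1, h2] <;> simp
  rw [h', h, one_mul]
  congr 1
  refine if_congr Iff.rfl (Finset.sum_congr rfl fun π _ => ?_) rfl
  refine if_congr ?_ rfl rfl
  simp only [Multiset.replicate_one, Multiset.mem_add, Multiset.mem_singleton]
  exact ⟨fun h a ha => h a (Or.inl ha), fun h a ha => ha.elim (h a) (fun e => e.le)⟩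

theorem numPartLe_zero (n : ℕ) : numPartLe 0 n = if n = 0 then 1 else 0 := by
  split_ifs with hn
  · subst hn
    simp [numPartLe]
  · refine Finset.sum_eq_zero fun π _ => if_neg fun h => hn ?_
    rw [← π.parts_sum]
    exact Multiset.sum_eq_zero fun a ha => Nat.le_zero.1 (h a ha)

theorem numPartLe_le (M n : ℕ) : numPartLe M n ≤ numPart n :=
  Finset.sum_le_sum fun π _ => by split_ifs <;> simp

theorem numPartLe_of_le {M n : ℕ} (h : n ≤ M) : numPartLe M n = numPart n :=
  Finset.sum_congr rfl fun π _ => if_pos fun _ ha => (π.le_of_mem_parts ha).trans h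

/-- The bound `n` on the index `m` loses nothing, since parts of a partition of `n` are at most `n`. -/
theorem sum_card_filter (k n : ℕ) :
    ∑ π : n.Partition, (π.parts.filter (fun a => a ≠ k)).card =
      ∑ m ∈ Finset.range n, if m + 1 = k then 0 else numOcc (m + 1) n := by
  have h : ∀ π : n.Partition, (π.parts.filter (fun a => a ≠ k)).card =
      ∑ m ∈ Finset.range n, if m + 1 = k then 0 else π.parts.count (m + 1) := fun π => by
    rw [← Multiset.sum_count_eq_card (s := Finset.range (n + 1))]
    · have h0 : π.parts.count 0 = 0 :=
        Multiset.count_eq_zero.2 fun h => (π.parts_pos h).ne rfl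
      rw [Finset.sum_range_succ', Multiset.count_filter, h0]
      simp only [Multiset.count_filter, ite_self, add_zero]
      exact Finset.sum_congr rfl fun m _ => by split_ifs <;> simp_all
    · intro a ha
      have := π.le_of_mem_parts (Multiset.mem_of_mem_filter ha)
      simpa using Nat.lt_succ_of_le this
  rw [Finset.sum_congr rfl fun π _ => h π, Finset.sum_comm]
  refine Finset.sum_congr rfl fun m _ => ?_
  split_ifs <;> simp [numOcc]

/-! ### Generating functions -/

section Analytic

variable {𝕜 : Type*} [RCLike 𝕜]

theorem hasSum_shift (f : ℕ → ℕ) (m : ℕ) (q s : 𝕜)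
    (h : HasSum (fun n => (f n : 𝕜) * q ^ n) s) :
    HasSum (fun n => ((if m ≤ n then f (n - m) else 0 : ℕ) : 𝕜) * q ^ n) (q ^ m * s) := by
  rw [← hasSum_nat_add_iff' m]
  have h0 : ∑ i ∈ Finset.range m, ((if m ≤ i then f (i - m) else 0 : ℕ) : 𝕜) * q ^ i = 0 :=
    Finset.sum_eq_zero fun i hi => by
      rw [if_neg (by simpa using hi)]
      simp
  rw [h0, sub_zero]
  have h1 : (fun n => ((if m ≤ n + m then f (n + m - m) else 0 : ℕ) : 𝕜) * q ^ (n + m)) =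
      fun n => q ^ m * ((f n : 𝕜) * q ^ n) := by
    funext n
    rw [if_pos (Nat.le_add_left m n), Nat.add_sub_cancel]
    ring
  rw [h1]
  exact h.mul_left (q ^ m)

theorem one_sub_pow_ne_zero {q : 𝕜} (hq : ‖q‖ < 1) {m : ℕ} (hm : 0 < m) : 1 - q ^ m ≠ 0 := by
  intro h
  have h1 : ‖q‖ ^ m = 1 := by rw [← norm_pow, ← sub_eq_zero.1 h, norm_one]
  exact (pow_lt_one₀ (norm_nonneg q) hq hm.ne').ne h1

/-- Every partial sum `S` of the series of `a` satisfies `S ≤ B + r ^ m * S`, where `B` is the sum of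
the series of `b`. This bounds the partial sums. -/
theorem summable_rec (a b : ℕ → ℕ) (m : ℕ) (hm : 0 < m)
    (h : ∀ n, a n = b n + if m ≤ n then a (n - m) else 0) {r : ℝ} (hr0 : 0 ≤ r) (hr : r < 1)
    (hb : Summable fun n => (b n : ℝ) * r ^ n) : Summable fun n => (a n : ℝ) * r ^ n := by
  have hpos : 0 < 1 - r ^ m := sub_pos.2 (pow_lt_one₀ hr0 hr hm.ne')
  refine summable_of_sum_range_le (c := (∑' n, (b n : ℝ) * r ^ n) / (1 - r ^ m))
    (fun n => by positivity) fun N => ?_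
  rw [le_div_iff₀ hpos]
  set S := ∑ n ∈ Finset.range N, (a n : ℝ) * r ^ n with hS
  have h1 : S = ∑ n ∈ Finset.range N, (b n : ℝ) * r ^ n +
      ∑ n ∈ Finset.range N, ((if m ≤ n then a (n - m) else 0 : ℕ) : ℝ) * r ^ n := by
    rw [hS, ← Finset.sum_add_distrib]
    refine Finset.sum_congr rfl fun n _ => ?_
    conv_lhs => rw [h n]
    push_cast
    ring
  have h2 : ∑ n ∈ Finset.range N, (b n : ℝ) * r ^ n ≤ ∑' n, (b n : ℝ) * r ^ n :=
    hb.sum_le_tsum _ fun n _ => by positivity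
  have h3 : ∑ n ∈ Finset.range N, ((if m ≤ n then a (n - m) else 0 : ℕ) : ℝ) * r ^ n ≤
      r ^ m * S := by
    calc _ ≤ ∑ n ∈ Finset.range (m + N),
          ((if m ≤ n then a (n - m) else 0 : ℕ) : ℝ) * r ^ n :=
          Finset.sum_le_sum_of_subset_of_nonneg
            (Finset.range_subset_range.2 (Nat.le_add_left N m)) fun n _ _ => by positivity
      _ = r ^ m * S := by
          rw [Finset.sum_range_add, Finset.sum_eq_zero, zero_add, hS, Finset.mul_sum]
          · refine Finset.sum_congr rfl fun n _ => ?_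
            simp [pow_add]
            ring
          · intro i hi
            rw [if_neg (by simpa using hi)]
            simp
  linarith

theorem hasSum_rec (a b : ℕ → ℕ) (m : ℕ) (hm : 0 < m)
    (h : ∀ n, a n = b n + if m ≤ n then a (n - m) else 0) {q B : 𝕜} (hq : ‖q‖ < 1)
    (hs : Summable fun n => (b n : ℝ) * ‖q‖ ^ n) (hb : HasSum (fun n => (b n : 𝕜) * q ^ n) B) :
    HasSum (fun n => (a n : 𝕜) * q ^ n) (B / (1 - q ^ m)) := by
  have ha : Summable fun n => (a n : 𝕜) * q ^ n :=
    Summable.of_norm (by simpa using summable_rec a b m hm h (norm_nonneg q) hq hs)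
  obtain ⟨s, ha⟩ := ha
  have h2 : s = B + q ^ m * s := by
    refine ha.unique ?_
    convert hb.add (hasSum_shift a m q s ha) using 2 with n
    conv_lhs => rw [h n]
    push_cast
    ring
  convert ha
  rw [div_eq_iff (one_sub_pow_ne_zero hq hm)]
  linear_combination -h2

theorem hasSum_numPartLe {q : 𝕜} (hq : ‖q‖ < 1) (M : ℕ) :
    (Summable fun n => (numPartLe M n : ℝ) * ‖q‖ ^ n) ∧
    HasSum (fun n => (numPartLe M n : 𝕜) * q ^ n)
      (∏ m ∈ Finset.range M, (1 - q ^ (m + 1)))⁻¹ := by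
  induction M with
  | zero =>
    constructor
    · refine summable_of_ne_finset_zero (s := {0}) fun n hn => ?_
      rw [numPartLe_zero, if_neg (by simpa using hn)]
      simp
    · convert hasSum_single (f := fun n => (numPartLe 0 n : 𝕜) * q ^ n) 0 fun n hn => ?_
      · simp [numPartLe_zero]
      · simp [numPartLe_zero, hn]
  | succ M ih =>
    refine ⟨summable_rec _ _ (M + 1) M.succ_pos (numPartLe_rec M) (norm_nonneg q) hq ih.1, ?_⟩
    rw [Finset.prod_range_succ, mul_inv, ← div_eq_mul_inv]
    exact hasSum_rec _ _ (M + 1) M.succ_pos (numPartLe_rec M) hq ih.1 ih.2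

/-- The infinite product is nonzero, so the inverses of the partial products converge too. -/
theorem tendsto_prod_inv {q : 𝕜} (hq : ‖q‖ < 1) :
    Filter.Tendsto (fun M => (∏ m ∈ Finset.range M, (1 - q ^ (m + 1)))⁻¹) Filter.atTop
      (nhds (∏' m : ℕ, (1 - q ^ (m + 1)))⁻¹) := by
  have hs : Summable fun m : ℕ => ‖-q ^ (m + 1)‖ := by
    simpa using (summable_nat_add_iff 1).2 (summable_geometric_of_lt_one (norm_nonneg q) hq)
  have hne : ∏' m : ℕ, (1 + -q ^ (m + 1)) ≠ 0 :=
    tprod_one_add_ne_zero_of_summable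
      (fun m => by simpa [← sub_eq_add_neg] using one_sub_pow_ne_zero hq m.succ_pos) hs
  have ht := (multipliable_one_add_of_summable hs).hasProd.tendsto_prod_nat
  simp only [← sub_eq_add_neg] at hne ht
  exact ht.inv₀ hne

/-- Up to `q ^ N` the series agrees with that of partitions with parts at most `N`, so its partial
sums are bounded by the convergent sequence of inverse partial products. -/
theorem summable_numPart {r : ℝ} (hr0 : 0 ≤ r) (hr : r < 1) :
    Summable fun n => (numPart n : ℝ) * r ^ n := by
  have hr' : ‖r‖ < 1 := by rwa [Real.norm_of_nonneg hr0]
  obtain ⟨C, hC⟩ := (tendsto_prod_inv hr').bddAbove_range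
  refine summable_of_sum_range_le (c := C) (fun n => by positivity) fun N => ?_
  have h := (hasSum_numPartLe hr' N).2
  calc ∑ n ∈ Finset.range N, (numPart n : ℝ) * r ^ n
      = ∑ n ∈ Finset.range N, (numPartLe N n : ℝ) * r ^ n :=
        Finset.sum_congr rfl fun n hn => by rw [numPartLe_of_le (Finset.mem_range.1 hn).le]
    _ ≤ _ := sum_le_hasSum _ (fun n _ => by positivity) h
    _ ≤ C := hC ⟨N, rfl⟩

/-- Euler's generating function for the partition numbers. -/
theorem hasSum_numPart {q : 𝕜} (hq : ‖q‖ < 1) :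
    HasSum (fun n => (numPart n : 𝕜) * q ^ n) (∏' m : ℕ, (1 - q ^ (m + 1)))⁻¹ := by
  have hs := summable_numPart (norm_nonneg q) hq
  have hs' : Summable fun n => (numPart n : 𝕜) * q ^ n := Summable.of_norm (by simpa using hs)
  have h1 : Filter.Tendsto (fun M => ∑' n, (numPartLe M n : 𝕜) * q ^ n) Filter.atTop
      (nhds (∑' n, (numPart n : 𝕜) * q ^ n)) := by
    refine tendsto_tsum_of_dominated_convergence hs (fun n => ?_)
      (Filter.Eventually.of_forall fun M n => ?_)
    · refine tendsto_const_nhds.congr' ?_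
      filter_upwards [Filter.eventually_ge_atTop n] with M hM
      rw [numPartLe_of_le hM]
    · rw [norm_mul, norm_pow, RCLike.norm_natCast]
      have := numPartLe_le M n
      gcongr
  simp only [fun M => (hasSum_numPartLe hq M).2.tsum_eq] at h1
  rw [← tendsto_nhds_unique h1 (tendsto_prod_inv hq)]
  exact hs'.hasSum

theorem hasSum_numOcc {q : 𝕜} (hq : ‖q‖ < 1) (m : ℕ) (hm : 0 < m) :
    HasSum (fun n => (numOcc m n : 𝕜) * q ^ n)
      (q ^ m * (∏' m : ℕ, (1 - q ^ (m + 1)))⁻¹ / (1 - q ^ m)) := by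
  refine hasSum_rec _ _ m hm (numOcc_rec m hm) hq ?_ (hasSum_shift _ m q _ (hasSum_numPart hq))
  exact (hasSum_shift _ m ‖q‖ _ (hasSum_numPart (by simpa using hq))).summable

/-- Absolute convergence of the double series over `m` and `n`. The row sums at `‖q‖` are at most a
constant times `‖q‖ ^ (m + 1)`, since `1 - ‖q‖ ^ (m + 1) ≥ 1 - ‖q‖`. -/
theorem summable_double (k : ℕ) {q : 𝕜} (hq : ‖q‖ < 1) :
    Summable fun x : ℕ × ℕ =>
      if x.1 + 1 = k then 0 else (numOcc (x.1 + 1) x.2 : 𝕜) * q ^ x.2 := by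
  have hr : ‖‖q‖‖ < 1 := by simpa using hq
  set P := (∏' m : ℕ, (1 - ‖q‖ ^ (m + 1)))⁻¹ with hP
  have hP0 : 0 ≤ P := (hasSum_numPart hr).nonneg fun n => by positivity
  have hmain : Summable fun x : ℕ × ℕ => (numOcc (x.1 + 1) x.2 : ℝ) * ‖q‖ ^ x.2 := by
    rw [summable_prod_of_nonneg fun x => by dsimp; positivity]
    refine ⟨fun m => (hasSum_numOcc hr (m + 1) m.succ_pos).summable, ?_⟩
    simp only [fun m : ℕ => (hasSum_numOcc hr (m + 1) m.succ_pos).tsum_eq, ← hP]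
    refine Summable.of_nonneg_of_le (fun m => ?_) (fun m => ?_)
      (((summable_nat_add_iff 1).2
        (summable_geometric_of_lt_one (norm_nonneg q) hq)).mul_right (P / (1 - ‖q‖)))
    · have : 0 < 1 - ‖q‖ ^ (m + 1) :=
        sub_pos.2 (pow_lt_one₀ (norm_nonneg q) hq m.succ_ne_zero)
      positivity
    · rw [mul_div_assoc]
      have h1 : 0 < 1 - ‖q‖ := sub_pos.2 hq
      have h2 : ‖q‖ ^ (m + 1) ≤ ‖q‖ :=
        pow_le_of_le_one (norm_nonneg q) hq.le m.succ_ne_zero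
      gcongr
  refine Summable.of_norm_bounded hmain fun x => ?_
  split_ifs
  · simp only [norm_zero]; positivity
  · simp

end Analytic

theorem tsum_nuLt (k : ℕ) (hk : 0 < k) (q : ℂ) (hq : ‖q‖ < 1) :
    ∑' n : ℕ, ((∑ π : n.Partition, nuLt k π : ℕ) : ℂ) * q ^ n =
      (∏' m : ℕ, (1 - q ^ (m + 1)))⁻¹ *
        ∑' m : ℕ, if m + 1 = k then 0 else q ^ (m + 1) / (1 - q ^ (m + 1)) := by
  have hcol : ∀ n : ℕ, ((∑ π : n.Partition, nuLt k π : ℕ) : ℂ) * q ^ n =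
      ∑' m : ℕ, if m + 1 = k then 0 else (numOcc (m + 1) n : ℂ) * q ^ n := fun n => by
    rw [sum_nuLt k hk, sum_card_filter, tsum_eq_sum (s := Finset.range n)]
    · push_cast
      rw [Finset.sum_mul]
      exact Finset.sum_congr rfl fun m _ => by split_ifs <;> simp
    · intro m hm
      have h0 : numOcc (m + 1) n = 0 := Finset.sum_eq_zero fun π _ =>
        Multiset.count_eq_zero.2 fun h => hm (Finset.mem_range.2 (π.le_of_mem_parts h))
      simp [h0]
  have hrow : ∀ m : ℕ, ∑' n : ℕ, (if m + 1 = k then 0 else (numOcc (m + 1) n : ℂ) * q ^ n) =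
      (∏' m : ℕ, (1 - q ^ (m + 1)))⁻¹ *
        if m + 1 = k then 0 else q ^ (m + 1) / (1 - q ^ (m + 1)) := fun m => by
    split_ifs
    · simp
    · rw [(hasSum_numOcc hq (m + 1) m.succ_pos).tsum_eq]
      ring
  have hcomm := Summable.tsum_comm
    (f := fun m n : ℕ => if m + 1 = k then 0 else (numOcc (m + 1) n : ℂ) * q ^ n)
    (summable_double k hq)
  calc _ = ∑' n : ℕ, ∑' m : ℕ, (if m + 1 = k then 0 else (numOcc (m + 1) n : ℂ) * q ^ n) :=
        tsum_congr hcol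
    _ = ∑' m : ℕ, ∑' n : ℕ, (if m + 1 = k then 0 else (numOcc (m + 1) n : ℂ) * q ^ n) := hcomm
    _ = _ := tsum_congr hrow
    _ = _ := tsum_mul_left

theorem statement7 (k : ℕ) (hk : 0 < k) :
    (∀ n : ℕ, ∑ π : n.Partition, nuLt k π =
        ∑ π : n.Partition, (π.parts.filter (fun a => a ≠ k)).card) ∧
    (∀ q : ℂ, ‖q‖ < 1 →
      ∑' n : ℕ, ((∑ π : n.Partition, nuLt k π : ℕ) : ℂ) * q ^ n =
        (∏' m : ℕ, (1 - q ^ (m + 1)))⁻¹ *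
          ∑' m : ℕ, if m + 1 = k then 0 else q ^ (m + 1) / (1 - q ^ (m + 1))) := by
  exact ⟨sum_nuLt k hk, tsum_nuLt k hk⟩
end
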